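/- Let f_0,…,f_k ∈ L with k ≥ 1 and f_k ≠ 0, and let A ⊆ L \ {0} be a finite set on which N_{L/K} is injective. If Σ_{α ∈ A} dim_K(ker F_α) = k, then N_{L/K}(f_0) = (−1)^{k·n} · N_{L/K}(f_k) · ∏_{α ∈ A} N_{L/K}(α)^{dim_K(ker F_α)}. -/

import Mathlib

/-!
Writing `αθ` for the map `β ↦ α·θ(β)`, one has `(αθ)^i(β) = N_i(α)·θ^i(β)`, so `F_α` is the value
of the skew polynomial `f = ∑ f_i x^i ∈ L[x; θ]` under the ring homomorphism
`L[x; θ] → End_K(L)`, `x ↦ αθ`.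

The proof is by induction on the degree `k`, and establishes simultaneously the bound
`∑_{α ∈ A} dim ker F_α ≤ k` and the norm formula in the case of equality. If some `ker F_{α₀}`
contains `β₀ ≠ 0`, put `a = α₀·θ(β₀)/β₀`. Then `x - a` divides `f` on the right, `f = g·(x - a)`,
hence `F_α = G_α ∘ (αθ - a)` for every `α` (`Fmap_succ_apply`). A nonzero element of
`ker (αθ - a)` forces `N(α) = N(a) = N(α₀)`, so this kernel vanishes for the other `α ∈ A`, and it
has dimension at most one for `α = α₀` (`finrank_ker_twist_le_one`). Therefore
`dim ker F_α ≤ dim ker G_α + [α = α₀]`, which gives the bound. In the equality case all these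
inequalities are equalities, and `f_0 = -g_0·a` gives the norm formula for `f` from that for `g`.
-/

noncomputable section

open Finset

variable {K L : Type*} [Field K] [Field L] [Algebra K L]

/-- The `i`-th truncated norm `N_i(y) = ∏_{j=0}^{i-1} θ^j(y)`. -/
def trunorm (θ : L ≃ₐ[K] L) (i : ℕ) (y : L) : L :=
  ∏ j ∈ Finset.range i, (θ ^ j) y

/-- The `K`-linear endomorphism `F_α : β ↦ ∑_{i<m} f_i·N_i(α)·θ^i(β)`. -/
def Fmap (θ : L ≃ₐ[K] L) (f : ℕ → L) (m : ℕ) (α : L) : L →ₗ[K] L :=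
  ∑ i ∈ Finset.range m, (f i * trunorm θ i α) • (θ ^ i).toLinearMap

lemma trunorm_mul (θ : L ≃ₐ[K] L) (i : ℕ) (x y : L) :
    trunorm θ i (x * y) = trunorm θ i x * trunorm θ i y := by
  simp [trunorm, Finset.prod_mul_distrib]

lemma trunorm_neg (θ : L ≃ₐ[K] L) (i : ℕ) (x : L) :
    trunorm θ i (-x) = (-1) ^ i * trunorm θ i x := by
  simp [trunorm, Finset.prod_neg]

lemma trunorm_ne_zero (θ : L ≃ₐ[K] L) (i : ℕ) {x : L} (hx : x ≠ 0) :
    trunorm θ i x ≠ 0 := by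
  exact Finset.prod_ne_zero_iff.2 fun j _ => (map_ne_zero_iff _ (θ ^ j).injective).2 hx

lemma trunorm_succ (θ : L ≃ₐ[K] L) (i : ℕ) (x : L) :
    trunorm θ (i + 1) x = trunorm θ i x * (θ ^ i) x :=
  Finset.prod_range_succ _ _

lemma trunorm_apply_self {θ : L ≃ₐ[K] L} {n : ℕ} (hθ : θ ^ n = 1) {x : L} (hx : x ≠ 0) :
    trunorm θ n (θ x) = trunorm θ n x := by
  have h1 : trunorm θ (n + 1) x = trunorm θ n x * x := by
    rw [trunorm_succ, hθ]; rfl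
  have h2 : trunorm θ (n + 1) x = trunorm θ n (θ x) * x := by
    simp only [trunorm, Finset.prod_range_succ', pow_succ, AlgEquiv.mul_apply, pow_zero,
      AlgEquiv.one_apply]
  exact mul_right_cancel₀ hx (h2.symm.trans h1)

/-- `α` and `a` are conjugate, hence of equal norm, when `αθ - a` has a nonzero kernel. -/
lemma trunorm_eq_of_conj {θ : L ≃ₐ[K] L} {n : ℕ} (hθ : θ ^ n = 1) {α a β : L} (hβ : β ≠ 0)
    (h : α * θ β = a * β) : trunorm θ n α = trunorm θ n a := by
  have h1 := congrArg (trunorm θ n) h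
  rw [trunorm_mul, trunorm_mul, trunorm_apply_self hθ hβ] at h1
  exact mul_right_cancel₀ (trunorm_ne_zero θ n hβ) h1

lemma Fmap_apply (θ : L ≃ₐ[K] L) (f : ℕ → L) (m : ℕ) (α β : L) :
    Fmap θ f m α β = ∑ i ∈ Finset.range m, f i * trunorm θ i α * (θ ^ i) β := by
  simp [Fmap, LinearMap.sum_apply]

/-- The map `αθ - a : β ↦ α·θ(β) - a·β`, the value of the skew polynomial `x - a` at `x = αθ`. -/
def twist (θ : L ≃ₐ[K] L) (α a : L) : L →ₗ[K] L :=
  α • θ.toLinearMap - a • LinearMap.id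

lemma twist_apply (θ : L ≃ₐ[K] L) (α a β : L) : twist θ α a β = α * θ β - a * β := by
  simp [twist]

/-- Evaluation at `x = αθ` of the identity `∑_{i ≤ m} f_i x^i = g·(x - a) - g_m·θ^m(a)·x^m`, where
`g = ∑_{i < m} g_i x^i` and the coefficients satisfy the recursion of division by `x - a`. -/
lemma Fmap_succ_apply (θ : L ≃ₐ[K] L) (f g : ℕ → L) (a : L) (h0 : f 0 = -(g 0 * a))
    (hs : ∀ i, f (i + 1) = g i - g (i + 1) * (θ ^ (i + 1)) a) (m : ℕ) (α β : L) :
    Fmap θ f (m + 1) α β = Fmap θ g m α (twist θ α a β)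
      - g m * (θ ^ m) a * trunorm θ m α * (θ ^ m) β := by
  induction m with
  | zero => simp [Fmap_apply, h0, trunorm]
  | succ m ih =>
    rw [Fmap_apply, Finset.sum_range_succ, ← Fmap_apply, ih]
    rw [Fmap_apply θ g (m + 1), Finset.sum_range_succ, ← Fmap_apply, hs, twist_apply]
    simp only [map_sub, map_mul, trunorm_succ, pow_succ, AlgEquiv.mul_apply]
    ring

lemma finrank_ker_comp_le {V : Type*} [AddCommGroup V] [Module K V] [FiniteDimensional K V]
    (G T : V →ₗ[K] V) :
    Module.finrank K (LinearMap.ker (G ∘ₗ T)) ≤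
      Module.finrank K (LinearMap.ker G) + Module.finrank K (LinearMap.ker T) := by
  let S : LinearMap.ker (G ∘ₗ T) →ₗ[K] LinearMap.ker G :=
    T.restrict (fun x hx => by simpa using hx)
  have h1 := LinearMap.finrank_range_add_finrank_ker S
  have h2 : Module.finrank K (LinearMap.range S) ≤ Module.finrank K (LinearMap.ker G) :=
    Submodule.finrank_le _
  have h3 : Module.finrank K (LinearMap.ker S) ≤ Module.finrank K (LinearMap.ker T) := by
    let J : LinearMap.ker S →ₗ[K] LinearMap.ker T :=
      ((LinearMap.ker (G ∘ₗ T)).subtype ∘ₗ (LinearMap.ker S).subtype).codRestrict _ (fun x => by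
        exact congrArg Subtype.val (LinearMap.mem_ker.1 x.2))
    refine LinearMap.finrank_le_finrank_of_injective (f := J) (fun x y hxy => ?_)
    have h : (J x : V) = J y := congrArg Subtype.val hxy
    exact Subtype.ext (Subtype.ext h)
  omega

/-- The quotient of two nonzero elements of `ker (αθ - a)` is fixed by `θ`, hence lies in `K`. -/
lemma finrank_ker_twist_le_one [IsGalois K L] [FiniteDimensional K L] (θ : L ≃ₐ[K] L)
    (hgen : ∀ σ : L ≃ₐ[K] L, σ ∈ Subgroup.zpowers θ) {α a : L} (hα : α ≠ 0) :
    Module.finrank K (LinearMap.ker (twist θ α a)) ≤ 1 := by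
  by_cases hbot : LinearMap.ker (twist θ α a) = ⊥
  · rw [hbot, finrank_bot]; exact zero_le_one
  obtain ⟨v, hv, hv0⟩ := Submodule.exists_mem_ne_zero_of_ne_bot hbot
  refine finrank_le_one (⟨v, hv⟩ : LinearMap.ker (twist θ α a)) ?_
  rintro ⟨w, hw⟩
  rw [LinearMap.mem_ker, twist_apply, sub_eq_zero] at hv hw
  have hθv : θ v ≠ 0 := by simpa using hv0
  have hfix : θ (w / v) = w / v := by
    rw [map_div₀, div_eq_div_iff hθv hv0]
    apply mul_left_cancel₀ hα
    linear_combination v * hw - w * hv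
  have hall : ∀ σ : L ≃ₐ[K] L, σ (w / v) = w / v := by
    intro σ
    have : Subgroup.zpowers θ ≤ MulAction.stabilizer (L ≃ₐ[K] L) (w / v) := by
      rw [Subgroup.zpowers_le]
      exact hfix
    exact this (hgen σ)
  obtain ⟨c, hc⟩ := (IsGalois.mem_range_algebraMap_iff_fixed (F := K) (w / v)).2 hall
  refine ⟨c, Subtype.ext ?_⟩
  simp [Algebra.smul_def, hc, hv0]

/-- The quotient of `∑ f_i x^i` by `x - a`, with coefficients computed from the constant term
upwards; this avoids a reversed recursion, at the price of requiring `a ≠ 0`. -/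
def rightQuot (θ : L ≃ₐ[K] L) (f : ℕ → L) (a : L) : ℕ → L
  | 0 => -(f 0 / a)
  | i + 1 => (rightQuot θ f a i - f (i + 1)) / (θ ^ (i + 1)) a

/-- The degree bound on the kernels together with the norm formula in the case of equality. -/
lemma sum_finrank_le_and_trunorm_eq (n : ℕ) [IsGalois K L] [FiniteDimensional K L]
    (θ : L ≃ₐ[K] L) (hθ : θ ^ n = 1)
    (hgen : ∀ σ : L ≃ₐ[K] L, σ ∈ Subgroup.zpowers θ)
    (A : Finset L) (hA0 : ∀ α ∈ A, α ≠ 0) (hinj : Set.InjOn (trunorm θ n) ↑A)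
    (k : ℕ) (f : ℕ → L) (hfk : f k ≠ 0) :
    ∑ α ∈ A, Module.finrank K ↥(LinearMap.ker (Fmap θ f (k + 1) α)) ≤ k ∧
    (∑ α ∈ A, Module.finrank K ↥(LinearMap.ker (Fmap θ f (k + 1) α)) = k →
      trunorm θ n (f 0)
        = (-1 : L) ^ (k * n) * trunorm θ n (f k) *
          ∏ α ∈ A,
            trunorm θ n α ^ Module.finrank K ↥(LinearMap.ker (Fmap θ f (k + 1) α))) := by
  classical
  induction k generalizing f with
  | zero =>
    have h : ∀ α, Module.finrank K ↥(LinearMap.ker (Fmap θ f (0 + 1) α)) = 0 := by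
      intro α
      rw [LinearMap.ker_eq_bot'.2, finrank_bot]
      intro β hβ
      simpa [Fmap_apply, trunorm, hfk] using hβ
    simp only [h]
    simp
  | succ k ih =>
    by_cases hz : ∀ α ∈ A, Module.finrank K ↥(LinearMap.ker (Fmap θ f (k + 1 + 1) α)) = 0
    · rw [Finset.sum_eq_zero hz]
      exact ⟨Nat.zero_le _, fun h => absurd h (Nat.succ_ne_zero k).symm⟩
    push Not at hz
    obtain ⟨α₀, hα₀, hd⟩ := hz
    have hbot : LinearMap.ker (Fmap θ f (k + 1 + 1) α₀) ≠ ⊥ := by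
      intro h
      rw [h, finrank_bot] at hd
      exact hd rfl
    obtain ⟨β₀, hβ₀, hβ₀0⟩ := Submodule.exists_mem_ne_zero_of_ne_bot hbot
    have hα₀0 := hA0 α₀ hα₀
    obtain ⟨a, ha⟩ : ∃ a, a = α₀ * θ β₀ / β₀ := ⟨_, rfl⟩
    have haβ : α₀ * θ β₀ = a * β₀ := by rw [ha]; field_simp
    have ha0 : a ≠ 0 := by
      rw [ha]; exact div_ne_zero (mul_ne_zero hα₀0 (by simpa using hβ₀0)) hβ₀0
    have hNa : trunorm θ n α₀ = trunorm θ n a := trunorm_eq_of_conj hθ hβ₀0 haβ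
    have hθa : ∀ i : ℕ, (θ ^ i) a ≠ 0 := fun i =>
      (map_ne_zero_iff _ (θ ^ i).injective).2 ha0
    obtain ⟨g, hg⟩ : ∃ g, g = rightQuot θ f a := ⟨_, rfl⟩
    have h0 : f 0 = -(g 0 * a) := by
      rw [hg, rightQuot]; field_simp
    have hs : ∀ i, f (i + 1) = g i - g (i + 1) * (θ ^ (i + 1)) a := by
      intro i
      rw [hg, rightQuot, div_mul_cancel₀ _ (hθa _)]
      ring
    have key := Fmap_succ_apply θ f g a h0 hs
    -- The obstruction to exact division is `g (k + 1)`; it is killed by the root `β₀` of `F_{α₀}`.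
    have hgk : g (k + 1) = 0 := by
      have h := key (k + 1) α₀ β₀
      rw [LinearMap.mem_ker.1 hβ₀, twist_apply, haβ, sub_self, map_zero, zero_sub, eq_comm,
        neg_eq_zero] at h
      have h1 : (θ ^ (k + 1)) β₀ ≠ 0 := 
        (map_ne_zero_iff _ (θ ^ (k + 1)).injective).2 hβ₀0
      exact (mul_eq_zero_iff_right (hθa (k + 1))).1 ((mul_eq_zero_iff_right
        (trunorm_ne_zero θ _ hα₀0)).1 ((mul_eq_zero_iff_right h1).1 h))
    have hfg : f (k + 1) = g k := by simp [hs, hgk]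
    have hcomp : ∀ α, Fmap θ f (k + 1 + 1) α = Fmap θ g (k + 1) α ∘ₗ twist θ α a := by
      intro α
      ext β
      rw [key (k + 1) α β, hgk]
      simp
    obtain ⟨ihle, iheq⟩ := ih g (hfg ▸ hfk)
    have hle : ∀ α ∈ A, Module.finrank K ↥(LinearMap.ker (Fmap θ f (k + 1 + 1) α)) ≤
        Module.finrank K ↥(LinearMap.ker (Fmap θ g (k + 1) α)) + if α = α₀ then 1 else 0 := by
      intro α hα
      rw [hcomp]
      refine (finrank_ker_comp_le _ _).trans (Nat.add_le_add_left ?_ _)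
      split_ifs with h
      · exact finrank_ker_twist_le_one θ hgen (hA0 α hα)
      · rw [LinearMap.ker_eq_bot'.2, finrank_bot]
        intro β hβ
        by_contra hβ0
        rw [twist_apply, sub_eq_zero] at hβ
        exact h (hinj hα hα₀ ((trunorm_eq_of_conj hθ hβ0 hβ).trans hNa.symm))
    have hsumle := Finset.sum_le_sum hle
    have hsplit : ∑ α ∈ A, (Module.finrank K ↥(LinearMap.ker (Fmap θ g (k + 1) α)) +
        if α = α₀ then 1 else 0) =
        ∑ α ∈ A, Module.finrank K ↥(LinearMap.ker (Fmap θ g (k + 1) α)) + 1 := by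
      rw [Finset.sum_add_distrib, Finset.sum_ite_eq' A α₀, if_pos hα₀]
    refine ⟨by omega, fun hsum => ?_⟩
    have hgsum : ∑ α ∈ A, Module.finrank K ↥(LinearMap.ker (Fmap θ g (k + 1) α)) = k := by omega
    have heq := (Finset.sum_eq_sum_iff_of_le hle).1 (by omega)
    have hprod : ∏ α ∈ A,
          trunorm θ n α ^ Module.finrank K ↥(LinearMap.ker (Fmap θ f (k + 1 + 1) α)) =
        (∏ α ∈ A, trunorm θ n α ^ Module.finrank K ↥(LinearMap.ker (Fmap θ g (k + 1) α))) *
          trunorm θ n a := by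
      rw [Finset.prod_congr rfl fun α hα => by rw [heq α hα, pow_add], Finset.prod_mul_distrib,
        ← hNa]
      congr 1
      simp [pow_ite, hα₀]
    rw [hprod, hfg, h0, trunorm_neg, trunorm_mul, iheq hgsum]
    ring

theorem stmt_13 (n : ℕ) [IsGalois K L] [FiniteDimensional K L]
    (hn : Module.finrank K L = n) (θ : L ≃ₐ[K] L)
    (hgen : ∀ σ : L ≃ₐ[K] L, σ ∈ Subgroup.zpowers θ)
    (k : ℕ) (hk : 1 ≤ k) (f : ℕ → L) (hfk : f k ≠ 0)
    (A : Finset L) (hA0 : ∀ α ∈ A, α ≠ 0)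
    (hinj : Set.InjOn (trunorm θ n) ↑A)
    (hsum : ∑ α ∈ A, Module.finrank K ↥(LinearMap.ker (Fmap θ f (k + 1) α)) = k) :
    trunorm θ n (f 0)
      = (-1 : L) ^ (k * n) * trunorm θ n (f k) *
          ∏ α ∈ A,
            trunorm θ n α ^ Module.finrank K ↥(LinearMap.ker (Fmap θ f (k + 1) α)) := by
  have hθ : θ ^ n = 1 := by
    rw [← hn, ← IsGalois.card_aut_eq_finrank K L]
    exact pow_card_eq_one'
  exact (sum_finrank_le_and_trunorm_eq n θ hθ hgen A hA0 hinj k f hfk).2 hsum
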